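/- arXiv:1909.03667 — 2 statements merged into one kernel-verified Lean document; each statement's English description precedes it below -/
import Mathlib

section
/- (Onofri-type dual inequality.) Let α ∈ [0,1). For every function g ∈ C_c^∞(ℝ²), one has log( ∫_{ℝ²} e^{g(x)−V(x)} dx ) ≤ 1/(16π(1−α)) ∫_{ℝ²} |∇g|² dx + ∫_{ℝ²} g e^{−V} dx. -/
open MeasureTheory Real Filter

noncomputable section

/-- The Euclidean plane ℝ². -/
abbrev E2 := EuclideanSpace ℝ (Fin 2)

/-- The probability density μ(x) = 1/(π (1+|x|²)²) on ℝ². -/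
def mu2 (x : E2) : ℝ := 1 / (π * (1 + ‖x‖ ^ 2) ^ 2)

/-- The external potential V(x) = −log μ(x) = 2 log(1+|x|²) + log π. -/
def Vpot (x : E2) : ℝ := 2 * Real.log (1 + ‖x‖ ^ 2) + Real.log π

/-- A function f on ℝ² is admissible if it is measurable, nonnegative a.e., integrable,
and ∫ f |log f|, ∫ V f and ∬ f(x) f(y) |log|x−y|| are all finite. -/
def Admissible (f : E2 → ℝ) : Prop :=
  Measurable f ∧ (∀ᵐ x : E2, 0 ≤ f x) ∧ Integrable f ∧
  Integrable (fun x => f x * |Real.log (f x)|) ∧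
  Integrable (fun x => Vpot x * f x) ∧
  Integrable (fun p : E2 × E2 => f p.1 * f p.2 * |Real.log ‖p.1 - p.2‖|)

/-- The repulsive free energy F⁺_β. -/
def Fplus (β : ℝ) (f : E2 → ℝ) : ℝ :=
  (∫ x, f x * Real.log (f x)) + β * (∫ x, Vpot x * f x)
    - (1 / (4 * π)) * ∫ p : E2 × E2, f p.1 * f p.2 * Real.log ‖p.1 - p.2‖

/-- The attractive free energy F⁻_β. -/
def Fminus (β : ℝ) (f : E2 → ℝ) : ℝ :=
  (∫ x, f x * Real.log (f x)) + β * (∫ x, Vpot x * f x)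
    + (1 / (4 * π)) * ∫ p : E2 × E2, f p.1 * f p.2 * Real.log ‖p.1 - p.2‖

/-!
With `ω(x) = 1 / (1 + |x|²)` one has `e^{-V} = ω² / π`, and the dilated bubbles `s² ω(s x)²` play
the role of the extremals. On a large square, transport `e^{2φ} = t² e^g ω²` to
`e^{2ψ} = s⁴ ω(s x)²` by the Knothe map, which has a triangular Jacobian and maps the square to
itself. The arithmetic-geometric mean inequality for the two diagonal entries linearises the
Jacobian equation, an integration by parts without boundary terms moves the derivatives from the
map to `φ`, and Young's inequality then produces `‖Dφ‖² / 4`, that is `‖Dg‖² / 16` up to terms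
which integrate explicitly. As the square exhausts the plane, the choice `s² = ∫ e^{g - V}` makes
the normalising constant `t` tend to `1`, and everything cancels except
`∫ (s² ω(s x) - ω(x)) dx = π log s²`, which yields the logarithm on the left of the Onofri
inequality. This is the case `α = 0`; the constant only gets worse for `α > 0`.
-/

section MonotoneTransport

lemma exists_orderIso_eq_integral {q : ℝ → ℝ} {m : ℝ} (hq : Continuous q) (hm : 0 < m)
    (hmq : ∀ y, m ≤ q y) (c : ℝ) : ∃ e : ℝ ≃o ℝ, ∀ y, e y = ∫ t in c..y, q t := by
  set Ψ : ℝ → ℝ := fun y => ∫ t in c..y, q t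
  have hΨ : ∀ y, HasDerivAt Ψ (q y) y := fun y => (hq.integral_hasStrictDerivAt c y).hasDerivAt
  have hΨc : Ψ c = 0 := intervalIntegral.integral_same
  have hmono : StrictMono Ψ := strictMono_of_hasDerivAt_pos hΨ fun y => hm.trans_le (hmq y)
  have hgrowth : ∀ ⦃x y⦄, x ≤ y → m * (y - x) ≤ Ψ y - Ψ x :=
    mul_sub_le_image_sub_of_le_deriv (fun y => (hΨ y).differentiableAt)
      fun y => (hmq y).trans_eq (hΨ y).deriv.symm
  have htop : Tendsto Ψ atTop atTop := by
    refine tendsto_atTop_mono' atTop ?_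
      ((tendsto_atTop_add_const_right _ (-c) tendsto_id).const_mul_atTop hm)
    filter_upwards [eventually_ge_atTop c] with y hy
    simpa only [id_eq, ← sub_eq_add_neg, hΨc, sub_zero] using hgrowth hy
  have hbot : Tendsto Ψ atBot atBot := by
    refine tendsto_atBot_mono' atBot ?_
      ((tendsto_atBot_add_const_right _ (-c) tendsto_id).const_mul_atBot hm)
    filter_upwards [eventually_le_atBot c] with y hy
    simp only [id_eq]
    linarith [hgrowth hy]
  have hcont : Continuous Ψ := continuous_iff_continuousAt.2 fun y => (hΨ y).continuousAt
  exact ⟨hmono.orderIsoOfSurjective Ψ (hcont.surjective htop hbot), fun y => rfl⟩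

lemma exists_continuous_eqOn_Icc_forall_le {c d : ℝ} {k : ℝ → ℝ} (hcd : c ≤ d)
    (hk : ContinuousOn k (Set.Icc c d)) (hk0 : ∀ y ∈ Set.Icc c d, 0 < k y) :
    ∃ (q : ℝ → ℝ) (m : ℝ), Continuous q ∧ 0 < m ∧ (∀ y, m ≤ q y) ∧ Set.EqOn q k (Set.Icc c d) := by
  obtain ⟨y₀, hy₀, hmin⟩ := isCompact_Icc.exists_isMinOn (Set.nonempty_Icc.2 hcd) hk
  exact ⟨Set.IccExtend hcd ((Set.Icc c d).domRestrict k), k y₀, hk.domRestrict.Icc_extend',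
    hk0 y₀ hy₀, fun y => hmin (Set.projIcc c d hcd y).2, fun y hy => Set.IccExtend_of_mem hcd _ hy⟩

lemma exists_monotone_transport {a b c d : ℝ} {f k : ℝ → ℝ} (hcd : c ≤ d) (hf : Continuous f)
    (hk : ContinuousOn k (Set.Icc c d)) (hf0 : ∀ x, 0 < f x) (hk0 : ∀ y ∈ Set.Icc c d, 0 < k y)
    (h : ∫ x in a..b, f x = ∫ y in c..d, k y) :
    ∃ T : ℝ → ℝ, ContDiff ℝ 1 T ∧ T a = c ∧ T b = d ∧ (∀ x, 0 < deriv T x) ∧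
      ∀ x ∈ Set.Icc a b, k (T x) * deriv T x = f x := by
  -- A positive lower bound on all of `ℝ` makes the primitive of the target density invertible.
  obtain ⟨q, m, hq, hm, hmq, hqk⟩ := exists_continuous_eqOn_Icc_forall_le hcd hk hk0
  have hq0 : ∀ y, 0 < q y := fun y => hm.trans_le (hmq y)
  obtain ⟨e, he⟩ := exists_orderIso_eq_integral hq hm hmq c
  set Φ : ℝ → ℝ := fun x => ∫ t in a..x, f t
  have hΦ : ∀ x, HasDerivAt Φ (f x) x := fun x => (hf.integral_hasStrictDerivAt a x).hasDerivAt
  set T : ℝ → ℝ := fun x => e.symm (Φ x)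
  have hTc : Continuous T :=
    e.symm.continuous.comp (continuous_iff_continuousAt.2 fun x => (hΦ x).continuousAt)
  have hT : ∀ x, HasDerivAt T (f x / q (T x)) x := fun x => by
    have hderiv : HasDerivAt e (q (T x)) (T x) := by
      simpa only [← he] using (hq.integral_hasStrictDerivAt c (T x)).hasDerivAt
    exact hderiv.of_comp_left hTc.continuousAt (hΦ x) (hq0 _).ne'
      (Eventually.of_forall fun x => e.apply_symm_apply _)
  have hTd : deriv T = fun x => f x / q (T x) := funext fun x => (hT x).deriv
  have hT0 : ∀ x, 0 < deriv T x := fun x => by rw [hTd]; exact div_pos (hf0 x) (hq0 _)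
  have hTa : T a = c := e.symm_apply_eq.2 (by simp only [Φ, he, intervalIntegral.integral_same])
  have hTb : T b = d := by
    refine e.symm_apply_eq.2 ((h.trans (intervalIntegral.integral_congr fun y hy => ?_)).trans
      (he d).symm)
    exact (hqk (Set.uIcc_of_le hcd ▸ hy)).symm
  refine ⟨T, contDiff_one_iff_deriv.2 ⟨fun x => (hT x).differentiableAt, ?_⟩, hTa, hTb, hT0,
    fun x hx => ?_⟩
  · rw [hTd]
    exact hf.div₀ (hq.comp hTc) fun x => (hq0 _).ne'
  · have hmono : Monotone T := (strictMono_of_deriv_pos hT0).monotone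
    rw [← hqk ⟨hTa ▸ hmono hx.1, hTb ▸ hmono hx.2⟩, (hT x).deriv, mul_div_cancel₀ _ (hq0 _).ne']

lemma integral_comp_mul_deriv_of_contDiff {a b : ℝ} {T h : ℝ → ℝ} (hT : ContDiff ℝ 1 T)
    (hh : Continuous h) : ∫ x in a..b, h (T x) * deriv T x = ∫ y in T a..T b, h y :=
  intervalIntegral.integral_comp_mul_deriv
    (fun x _ => (hT.differentiable one_ne_zero x).hasDerivAt)
    (hT.continuous_deriv le_rfl).continuousOn hh

end MonotoneTransport

section Interval

lemma integral_exp_mul_deriv_le {a b : ℝ} (hab : a ≤ b) {T φ : ℝ → ℝ} (hT : ContDiff ℝ 1 T)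
    (hφ : ContDiff ℝ 1 φ) (hTa : T a = a) (hTb : T b = b) :
    ∫ x in a..b, exp (φ x) * deriv T x ≤
      ∫ x in a..b, (exp (φ x) * (1 + deriv φ x * x) + deriv φ x ^ 2 / 4
        + exp (2 * φ x) * T x ^ 2) := by
  have hTc := hT.continuous
  have hφc := hφ.continuous
  have := hT.continuous_deriv le_rfl
  have := hφ.continuous_deriv le_rfl
  have hderiv : ∀ x, HasDerivAt (fun x => exp (φ x) * (T x - x))
      (exp (φ x) * deriv φ x * (T x - x) + exp (φ x) * (deriv T x - 1)) x := fun x =>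
    ((hφ.differentiable one_ne_zero x).hasDerivAt.exp).mul
      ((hT.differentiable one_ne_zero x).hasDerivAt.sub (hasDerivAt_id x))
  have hparts : ∫ x in a..b, (exp (φ x) * deriv φ x * (T x - x)
      + exp (φ x) * (deriv T x - 1)) = 0 := by
    rw [intervalIntegral.integral_eq_sub_of_hasDerivAt (fun x _ => hderiv x)
      (Continuous.intervalIntegrable (by fun_prop) a b), hTa, hTb]
    simp only [sub_self, mul_zero]
  rw [← sub_zero (∫ x in a..b, exp (φ x) * deriv T x), ← hparts, ← intervalIntegral.integral_sub
    (Continuous.intervalIntegrable (by fun_prop) a b)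
    (Continuous.intervalIntegrable (by fun_prop) a b)]
  refine intervalIntegral.integral_mono_on hab (Continuous.intervalIntegrable (by fun_prop) a b)
    (Continuous.intervalIntegrable (by fun_prop) a b) fun x _ => ?_
  have hexp : exp (2 * φ x) = exp (φ x) ^ 2 := by rw [two_mul, exp_add, sq]
  rw [hexp]
  linear_combination sq_nonneg (deriv φ x / 2 + exp (φ x) * T x)

lemma two_mul_mul_mul_le_of_sq_eq {c t u v : ℝ} (hc : 0 ≤ c) (ht : 0 ≤ t) (hu : 0 ≤ u)
    (h : c * v ^ 2 * t = u ^ 2) : 2 * c * v * t ≤ (c + t) * u := by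
  refine (abs_le_of_sq_le_sq' ?_ (by positivity)).2
  linear_combination 4 * c * t * h + sq_nonneg ((c - t) * u)

lemma mul_integral_exp_sub_le {a b c : ℝ} (hab : a ≤ b) (hc : 0 < c) {φ ψ : ℝ → ℝ}
    (hφ : ContDiff ℝ 1 φ) (hψ : Continuous ψ)
    (h : ∫ y in a..b, exp (2 * φ y) = c * ∫ y in a..b, exp (2 * ψ y)) :
    c * ∫ y in a..b, (2 * exp (ψ y) - y ^ 2 * exp (2 * ψ y)) ≤
      ∫ y in a..b, (c * exp (φ y) + exp (φ y) * (1 + deriv φ y * y) + deriv φ y ^ 2 / 4) := by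
  have hφc := hφ.continuous
  have := hφ.continuous_deriv le_rfl
  obtain ⟨T, hT, hTa, hTb, hT0, hmass⟩ := exists_monotone_transport hab
    (f := fun y => exp (2 * φ y)) (k := fun y => c * exp (2 * ψ y)) (by fun_prop) (by fun_prop)
    (fun y => exp_pos _) (fun y _ => by positivity)
    (by rw [h, intervalIntegral.integral_const_mul])
  have hTc := hT.continuous
  have := hT.continuous_deriv le_rfl
  have hpush := integral_comp_mul_deriv_of_contDiff (a := a) (b := b) hT
    (h := fun y => c * (2 * exp (ψ y) - y ^ 2 * exp (2 * ψ y))) (by fun_prop)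
  rw [hTa, hTb, intervalIntegral.integral_const_mul] at hpush
  have hamgm : ∀ y ∈ Set.Icc a b,
      c * (2 * exp (ψ (T y)) - T y ^ 2 * exp (2 * ψ (T y))) * deriv T y ≤
        c * exp (φ y) - exp (2 * φ y) * T y ^ 2 + exp (φ y) * deriv T y := fun y hy => by
    have hsq := hmass y hy
    have := two_mul_mul_mul_le_of_sq_eq hc.le (hT0 y).le (exp_pos (φ y)).le
      (v := exp (ψ (T y))) (by simpa only [← exp_nat_mul, Nat.cast_ofNat] using hsq)
    linear_combination this - T y ^ 2 * hsq
  rw [← hpush]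
  calc _ ≤ ∫ y in a..b, (c * exp (φ y) - exp (2 * φ y) * T y ^ 2 + exp (φ y) * deriv T y) :=
        intervalIntegral.integral_mono_on hab (Continuous.intervalIntegrable (by fun_prop) a b)
          (Continuous.intervalIntegrable (by fun_prop) a b) hamgm
    _ ≤ (∫ y in a..b, (c * exp (φ y) - exp (2 * φ y) * T y ^ 2)) +
          ∫ y in a..b, (exp (φ y) * (1 + deriv φ y * y) + deriv φ y ^ 2 / 4
            + exp (2 * φ y) * T y ^ 2) := by
        rw [intervalIntegral.integral_add (Continuous.intervalIntegrable (by fun_prop) a b)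
          (Continuous.intervalIntegrable (by fun_prop) a b)]
        gcongr
        exact integral_exp_mul_deriv_le hab hT hφ hTa hTb
    _ = _ := by
        rw [← intervalIntegral.integral_add (Continuous.intervalIntegrable (by fun_prop) a b)
          (Continuous.intervalIntegrable (by fun_prop) a b)]
        exact intervalIntegral.integral_congr fun y _ => by ring

end Interval

section Rectangle

variable {a b : ℝ × ℝ} {f g φ ψ : ℝ × ℝ → ℝ} {T : ℝ → ℝ}

lemma setIntegral_Icc_prod (hab : a ≤ b) (hf : Continuous f) :
    ∫ z in Set.Icc a b, f z = ∫ x in a.1..b.1, ∫ y in a.2..b.2, f (x, y) := by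
  have hint : IntegrableOn f (Set.Icc a b) := hf.integrableOn_Icc
  rw [Set.Icc_prod_eq, Measure.volume_eq_prod] at hint ⊢
  simp only [intervalIntegral.integral_of_le hab.1, intervalIntegral.integral_of_le hab.2,
    ← integral_Icc_eq_integral_Ioc, setIntegral_prod f hint]

lemma setIntegral_Icc_prod_symm (hab : a ≤ b) (hf : Continuous f) :
    ∫ z in Set.Icc a b, f z = ∫ y in a.2..b.2, ∫ x in a.1..b.1, f (x, y) := by
  rw [setIntegral_Icc_prod hab hf]
  refine intervalIntegral_intervalIntegral_swap ?_
  rw [Set.uIoc_of_le hab.1, Set.uIoc_of_le hab.2]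
  have hint : IntegrableOn f (Set.Icc a b) := hf.integrableOn_Icc
  refine hint.mono_set ?_
  rw [Set.Icc_prod_eq]
  exact Set.prod_mono Set.Ioc_subset_Icc_self Set.Ioc_subset_Icc_self

lemma setIntegral_Icc_prod_mono (hab : a ≤ b) (hf : Continuous f) (hg : Continuous g)
    (h : ∀ x ∈ Set.Icc a.1 b.1, ∫ y in a.2..b.2, f (x, y) ≤ ∫ y in a.2..b.2, g (x, y)) :
    ∫ z in Set.Icc a b, f z ≤ ∫ z in Set.Icc a b, g z := by
  rw [setIntegral_Icc_prod hab hf, setIntegral_Icc_prod hab hg]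
  exact intervalIntegral.integral_mono_on hab.1
    (Continuous.intervalIntegrable (by fun_prop) _ _)
    (Continuous.intervalIntegrable (by fun_prop) _ _) h

lemma setIntegral_Icc_prod_mono_symm (hab : a ≤ b) (hf : Continuous f) (hg : Continuous g)
    (h : ∀ y ∈ Set.Icc a.2 b.2, ∫ x in a.1..b.1, f (x, y) ≤ ∫ x in a.1..b.1, g (x, y)) :
    ∫ z in Set.Icc a b, f z ≤ ∫ z in Set.Icc a b, g z := by
  rw [setIntegral_Icc_prod_symm hab hf, setIntegral_Icc_prod_symm hab hg]
  exact intervalIntegral.integral_mono_on hab.2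
    (Continuous.intervalIntegrable (by fun_prop) _ _)
    (Continuous.intervalIntegrable (by fun_prop) _ _) h

lemma deriv_comp_prodMk_left {x y : ℝ} (hφ : DifferentiableAt ℝ φ (x, y)) :
    deriv (fun t => φ (t, y)) x = fderiv ℝ φ (x, y) (1, 0) :=
  (hφ.hasFDerivAt.comp_hasDerivAt x ((hasDerivAt_id x).prodMk (hasDerivAt_const x y))).deriv

lemma deriv_comp_prodMk_right {x y : ℝ} (hφ : DifferentiableAt ℝ φ (x, y)) :
    deriv (fun t => φ (x, t)) y = fderiv ℝ φ (x, y) (0, 1) :=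
  (hφ.hasFDerivAt.comp_hasDerivAt y ((hasDerivAt_const y x).prodMk (hasDerivAt_id y))).deriv

lemma exists_monotone_transport_fst (hab : a ≤ b) (hlt : a.2 < b.2) (hf : Continuous f)
    (hg : Continuous g) (hf0 : ∀ z, 0 < f z) (hg0 : ∀ z, 0 < g z)
    (h : ∫ z in Set.Icc a b, f z = ∫ z in Set.Icc a b, g z) :
    ∃ T : ℝ → ℝ, ContDiff ℝ 1 T ∧ T a.1 = a.1 ∧ T b.1 = b.1 ∧ (∀ x, 0 < deriv T x) ∧
      ∀ x ∈ Set.Icc a.1 b.1,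
        ∫ y in a.2..b.2, f (x, y) = deriv T x * ∫ y in a.2..b.2, g (T x, y) := by
  have hpos : ∀ {u : ℝ × ℝ → ℝ}, Continuous u → (∀ z, 0 < u z) →
      ∀ x, 0 < ∫ y in a.2..b.2, u (x, y) := fun hu hu0 x =>
    intervalIntegral.intervalIntegral_pos_of_pos
      (Continuous.intervalIntegrable (by fun_prop) _ _) (fun y => hu0 _) hlt
  rw [setIntegral_Icc_prod hab hf, setIntegral_Icc_prod hab hg] at h
  obtain ⟨T, hT, hTa, hTb, hT0, hmass⟩ := exists_monotone_transport hab.1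
    (f := fun x => ∫ y in a.2..b.2, f (x, y)) (k := fun x => ∫ y in a.2..b.2, g (x, y))
    (by fun_prop) (Continuous.continuousOn (by fun_prop)) (hpos hf hf0) (fun x _ => hpos hg hg0 x) h
  exact ⟨T, hT, hTa, hTb, hT0, fun x hx => (hmass x hx).symm.trans (mul_comm _ _)⟩

lemma setIntegral_comp_fst_mul_deriv (hab : a ≤ b) (hT : ContDiff ℝ 1 T) (hTa : T a.1 = a.1)
    (hTb : T b.1 = b.1) (hf : Continuous f) :
    ∫ z in Set.Icc a b, f (T z.1, z.2) * deriv T z.1 = ∫ z in Set.Icc a b, f z := by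
  have hTc := hT.continuous
  have := hT.continuous_deriv le_rfl
  rw [setIntegral_Icc_prod_symm hab (by fun_prop), setIntegral_Icc_prod_symm hab hf]
  refine intervalIntegral.integral_congr fun y _ => ?_
  exact (integral_comp_mul_deriv_of_contDiff hT (h := fun x => f (x, y)) (by fun_prop)).trans
    (by rw [hTa, hTb])

lemma setIntegral_exp_mul_deriv_fst_le (hab : a ≤ b) (hφ : ContDiff ℝ 1 φ) (hT : ContDiff ℝ 1 T)
    (hTa : T a.1 = a.1) (hTb : T b.1 = b.1) :
    ∫ z in Set.Icc a b, exp (φ z) * deriv T z.1 ≤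
      ∫ z in Set.Icc a b, (exp (φ z) * (1 + fderiv ℝ φ z (1, 0) * z.1)
        + fderiv ℝ φ z (1, 0) ^ 2 / 4 + exp (2 * φ z) * T z.1 ^ 2) := by
  have hTc := hT.continuous
  have := hT.continuous_deriv le_rfl
  have hφc := hφ.continuous
  have := hφ.continuous_fderiv one_ne_zero
  refine setIntegral_Icc_prod_mono_symm hab (by fun_prop) (by fun_prop) fun y _ => ?_
  simpa only [deriv_comp_prodMk_left (hφ.differentiable one_ne_zero _)] using
    integral_exp_mul_deriv_le hab.1 hT (φ := fun x => φ (x, y)) (by fun_prop) hTa hTb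

lemma setIntegral_deriv_mul_exp_sub_le (hab : a ≤ b) (hφ : ContDiff ℝ 1 φ) (hψ : Continuous ψ)
    (hT : ContDiff ℝ 1 T) (hT0 : ∀ x, 0 < deriv T x)
    (h : ∀ x ∈ Set.Icc a.1 b.1, ∫ y in a.2..b.2, exp (2 * φ (x, y)) =
      deriv T x * ∫ y in a.2..b.2, exp (2 * ψ (T x, y))) :
    ∫ z in Set.Icc a b, deriv T z.1 * (2 * exp (ψ (T z.1, z.2))
        - z.2 ^ 2 * exp (2 * ψ (T z.1, z.2))) ≤
      ∫ z in Set.Icc a b, (deriv T z.1 * exp (φ z) + exp (φ z) * (1 + fderiv ℝ φ z (0, 1) * z.2)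
        + fderiv ℝ φ z (0, 1) ^ 2 / 4) := by
  have hTc := hT.continuous
  have := hT.continuous_deriv le_rfl
  have hφc := hφ.continuous
  have := hφ.continuous_fderiv one_ne_zero
  refine setIntegral_Icc_prod_mono hab (by fun_prop) (by fun_prop) fun x hx => ?_
  simp only [intervalIntegral.integral_const_mul]
  simpa only [deriv_comp_prodMk_right (hφ.differentiable one_ne_zero _)] using
    mul_integral_exp_sub_le hab.2 (hT0 x) (φ := fun y => φ (x, y)) (ψ := fun y => ψ (T x, y))
      (by fun_prop) (by fun_prop) (h x hx)

lemma setIntegral_exp_mul_sq_fst_eq (hab : a ≤ b) (hφ : Continuous φ) (hψ : Continuous ψ)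
    (hT : ContDiff ℝ 1 T) (hTa : T a.1 = a.1) (hTb : T b.1 = b.1)
    (h : ∀ x ∈ Set.Icc a.1 b.1, ∫ y in a.2..b.2, exp (2 * φ (x, y)) =
      deriv T x * ∫ y in a.2..b.2, exp (2 * ψ (T x, y))) :
    ∫ z in Set.Icc a b, exp (2 * φ z) * T z.1 ^ 2 =
      ∫ z in Set.Icc a b, z.1 ^ 2 * exp (2 * ψ z) := by
  have hTc := hT.continuous
  have := hT.continuous_deriv le_rfl
  rw [← setIntegral_comp_fst_mul_deriv hab hT hTa hTb (f := fun z => z.1 ^ 2 * exp (2 * ψ z))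
    (by fun_prop), setIntegral_Icc_prod hab (by fun_prop), setIntegral_Icc_prod hab (by fun_prop)]
  refine intervalIntegral.integral_congr fun x hx => ?_
  simp only [intervalIntegral.integral_mul_const, intervalIntegral.integral_const_mul]
  rw [h x (Set.uIcc_of_le hab.1 ▸ hx)]
  ring

lemma clm_prod_apply_eq (L : ℝ × ℝ →L[ℝ] ℝ) (z : ℝ × ℝ) :
    L z = L (1, 0) * z.1 + L (0, 1) * z.2 := by
  conv_lhs => rw [show z = z.1 • (1, 0) + z.2 • (0, 1) by ext <;> simp]
  rw [map_add, map_smul, map_smul, smul_eq_mul, smul_eq_mul, mul_comm, mul_comm z.2]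

/- The Knothe map `(x, y) ↦ (T x, S x y)` of the box onto itself is never formed: `T` matches the
first marginals and `S x` is hidden in the one-dimensional inequality applied on each fibre. -/
lemma setIntegral_exp_sub_le (hab : a ≤ b) (hlt : a.2 < b.2) (hφ : ContDiff ℝ 1 φ)
    (hψ : Continuous ψ)
    (h : ∫ z in Set.Icc a b, exp (2 * φ z) = ∫ z in Set.Icc a b, exp (2 * ψ z)) :
    ∫ z in Set.Icc a b, (2 * exp (ψ z) - (z.1 ^ 2 + z.2 ^ 2) * exp (2 * ψ z)) ≤
      ∫ z in Set.Icc a b, (exp (φ z) * (2 + fderiv ℝ φ z z)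
        + (fderiv ℝ φ z (1, 0) ^ 2 + fderiv ℝ φ z (0, 1) ^ 2) / 4) := by
  have hφc := hφ.continuous
  have := hφ.continuous_fderiv one_ne_zero
  obtain ⟨T, hT, hTa, hTb, hT0, hfibre⟩ := exists_monotone_transport_fst hab hlt
    (f := fun z => exp (2 * φ z)) (g := fun z => exp (2 * ψ z)) (by fun_prop) (by fun_prop)
    (fun z => exp_pos _) (fun z => exp_pos _) h
  have hTc := hT.continuous
  have := hT.continuous_deriv le_rfl
  have hfst := setIntegral_exp_mul_deriv_fst_le hab hφ hT hTa hTb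
  have hsnd := setIntegral_deriv_mul_exp_sub_le hab hφ hψ hT hT0 hfibre
  have hmoment := setIntegral_exp_mul_sq_fst_eq hab hφc hψ hT hTa hTb hfibre
  have hpush := setIntegral_comp_fst_mul_deriv hab hT hTa hTb
    (f := fun z => 2 * exp (ψ z) - z.2 ^ 2 * exp (2 * ψ z)) (by fun_prop)
  have hint : ∀ {u : ℝ × ℝ → ℝ}, Continuous u → IntegrableOn u (Set.Icc a b) :=
    fun hu => hu.integrableOn_Icc
  calc _ = (∫ z in Set.Icc a b, deriv T z.1 * (2 * exp (ψ (T z.1, z.2))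
            - z.2 ^ 2 * exp (2 * ψ (T z.1, z.2))))
          - ∫ z in Set.Icc a b, exp (2 * φ z) * T z.1 ^ 2 := by
        simp only [mul_comm (deriv T _), hpush, hmoment]
        rw [← integral_sub (hint (by fun_prop)) (hint (by fun_prop))]
        congr with z
        ring
    _ ≤ (∫ z in Set.Icc a b, (deriv T z.1 * exp (φ z)
            + exp (φ z) * (1 + fderiv ℝ φ z (0, 1) * z.2) + fderiv ℝ φ z (0, 1) ^ 2 / 4))
          - (∫ z in Set.Icc a b, exp (2 * φ z) * T z.1 ^ 2)
          + ((∫ z in Set.Icc a b, (exp (φ z) * (1 + fderiv ℝ φ z (1, 0) * z.1)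
            + fderiv ℝ φ z (1, 0) ^ 2 / 4 + exp (2 * φ z) * T z.1 ^ 2))
          - ∫ z in Set.Icc a b, exp (φ z) * deriv T z.1) := by linarith
    _ = _ := by
        rw [← integral_sub (hint (by fun_prop)) (hint (by fun_prop)),
          ← integral_sub (hint (by fun_prop)) (hint (by fun_prop)),
          ← integral_add (hint (by fun_prop)) (hint (by fun_prop))]
        congr with z
        rw [clm_prod_apply_eq (fderiv ℝ φ z) z]
        ring

end Rectangle

section Square

/-- The square `[-R, R]²` of the plane, over which integrals are truncated. -/
def square (R : ℝ) : Set E2 := {x | ∀ i, |x i| ≤ R}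

/-- The identification of `ℝ × ℝ` with the Euclidean plane, used for Fubini's theorem. -/
def planeEquiv : (ℝ × ℝ) ≃L[ℝ] E2 :=
  (ContinuousLinearEquiv.finTwoArrow ℝ ℝ).symm.trans (EuclideanSpace.equiv (Fin 2) ℝ).symm

lemma planeEquiv_apply (z : ℝ × ℝ) : planeEquiv z = !₂[z.1, z.2] := rfl

lemma measurePreserving_planeEquiv : MeasurePreserving planeEquiv :=
  (PiLp.volume_preserving_toLp (Fin 2)).comp (volume_preserving_finTwoArrow ℝ).symm

lemma planeEquiv_preimage_square (R : ℝ) :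
    planeEquiv ⁻¹' square R = Set.Icc (-R, -R) (R, R) := by
  ext z
  simp only [square, planeEquiv_apply, Set.mem_preimage, Set.mem_ofPred_eq, Fin.forall_fin_two,
    abs_le, Set.mem_Icc, Prod.le_def]
  exact and_and_and_comm

lemma norm_planeEquiv_sq (z : ℝ × ℝ) : ‖planeEquiv z‖ ^ 2 = z.1 ^ 2 + z.2 ^ 2 := by
  simp only [planeEquiv_apply, EuclideanSpace.real_norm_sq_eq, Fin.sum_univ_two]
  rfl

lemma norm_sq_eq_planeEquiv (L : E2 →L[ℝ] ℝ) :
    ‖L‖ ^ 2 = L (planeEquiv (1, 0)) ^ 2 + L (planeEquiv (0, 1)) ^ 2 := by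
  rw [(EuclideanSpace.basisFun (Fin 2) ℝ).norm_dual L, Fin.sum_univ_two]
  congr 3 <;> ext i <;> fin_cases i <;> simp [planeEquiv_apply]

lemma setIntegral_square (R : ℝ) (f : E2 → ℝ) :
    ∫ x in square R, f x = ∫ z in Set.Icc (-R, -R) (R, R), f (planeEquiv z) := by
  rw [← planeEquiv_preimage_square]
  exact (measurePreserving_planeEquiv.setIntegral_preimage_emb
    planeEquiv.toHomeomorph.measurableEmbedding f _).symm

lemma isCompact_square (R : ℝ) : IsCompact (square R) := by
  rw [← planeEquiv.surjective.image_preimage (square R), planeEquiv_preimage_square]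
  exact isCompact_Icc.image planeEquiv.continuous

lemma aecover_square : AECover (volume : Measure E2) atTop square where
  ae_eventually_mem := ae_of_all _ fun x => by
    filter_upwards [eventually_ge_atTop ‖x‖] with R hR i
    exact (PiLp.norm_apply_le x i).trans hR
  measurableSet R := (isCompact_square R).measurableSet

lemma eventually_subset_square {K : Set E2} (hK : IsCompact K) :
    ∀ᶠ R in atTop, K ⊆ square R := by
  obtain ⟨r, hr⟩ := hK.isBounded.subset_closedBall (0 : E2)
  filter_upwards [eventually_ge_atTop r] with R hR x hx i
  exact (PiLp.norm_apply_le x i).trans ((mem_closedBall_zero_iff.1 (hr hx)).trans hR)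

lemma setIntegral_square_exp_sub_le {R : ℝ} (hR : 0 < R) {φ ψ : E2 → ℝ} (hφ : ContDiff ℝ 1 φ)
    (hψ : Continuous ψ)
    (h : ∫ x in square R, exp (2 * φ x) = ∫ x in square R, exp (2 * ψ x)) :
    ∫ x in square R, (2 * exp (ψ x) - ‖x‖ ^ 2 * exp (2 * ψ x)) ≤
      ∫ x in square R, (exp (φ x) * (2 + fderiv ℝ φ x x) + ‖fderiv ℝ φ x‖ ^ 2 / 4) := by
  have hlt : -R < R := neg_lt_self hR
  simp only [setIntegral_square] at h ⊢
  have hbox := setIntegral_exp_sub_le (Prod.mk_le_mk.2 ⟨hlt.le, hlt.le⟩) hlt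
    (hφ.comp planeEquiv.contDiff) (hψ.comp planeEquiv.continuous) h
  simpa only [planeEquiv.comp_right_fderiv, norm_planeEquiv_sq, norm_sq_eq_planeEquiv,
    ContinuousLinearMap.comp_apply, ContinuousLinearEquiv.coe_coe, Function.comp_apply] using hbox

end Square

section IntegrationByParts

variable {E F : Type*} [NormedAddCommGroup E] [NormedSpace ℝ E] [FiniteDimensional ℝ E]
  [MeasurableSpace E] [BorelSpace E] [NormedAddCommGroup F] [NormedSpace ℝ F]
  (μ : Measure E) [μ.IsAddHaarMeasure] {f : E → F}

lemma integral_clm_smul_fderiv_apply (hf : ContDiff ℝ 1 f) (hsupp : HasCompactSupport f)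
    (L : E →L[ℝ] ℝ) (v : E) : ∫ x, L x • fderiv ℝ f x v ∂μ = -(L v • ∫ x, f x ∂μ) := by
  have := hf.continuous_fderiv one_ne_zero
  have hfc := hf.continuous
  rw [integral_smul_fderiv_eq_neg_fderiv_smul_of_integrable
    (by simpa only [L.fderiv] using (hfc.integrable_of_hasCompactSupport hsupp).fun_smul (L v))
    (Continuous.integrable_of_hasCompactSupport (by fun_prop)
      (hsupp.fderiv_apply (𝕜 := ℝ) (v := v)).smul_left)
    (Continuous.integrable_of_hasCompactSupport (by fun_prop) hsupp.smul_left)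
    (fun x _ => L.differentiableAt) (fun x _ => hf.differentiable one_ne_zero x)]
  simp only [L.fderiv, integral_smul]

lemma integral_fderiv_apply_self (hf : ContDiff ℝ 1 f) (hsupp : HasCompactSupport f) :
    ∫ x, fderiv ℝ f x x ∂μ = -((Module.finrank ℝ E : ℝ) • ∫ x, f x ∂μ) := by
  have := hf.continuous_fderiv one_ne_zero
  let b := Module.finBasis ℝ E
  let L := fun i => LinearMap.toContinuousLinearMap (b.coord i)
  have hsum : ∀ x, fderiv ℝ f x x = ∑ i, L i x • fderiv ℝ f x (b i) := fun x =>
    (congrArg (fderiv ℝ f x) (b.sum_repr x)).symm.trans (by simp [L, -Module.Basis.sum_repr])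
  have hint : ∀ i, Integrable (fun x => L i x • fderiv ℝ f x (b i)) μ := fun i =>
    Continuous.integrable_of_hasCompactSupport (by fun_prop)
      (hsupp.fderiv_apply (𝕜 := ℝ) (v := b i)).smul_left
  have hL : ∀ i, L i (b i) = 1 := fun i => by simp [L]
  simp only [hsum, integral_finsetSum _ fun i _ => hint i,
    integral_clm_smul_fderiv_apply μ hf hsupp, hL, one_smul, Finset.sum_neg_distrib,
    Finset.sum_const, Finset.card_univ, Fintype.card_fin, Nat.cast_smul_eq_nsmul]

end IntegrationByParts

section Bubble

variable {E : Type*} [NormedAddCommGroup E]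

/-- The bubble `ω(x) = 1 / (1 + |x|²)`, the conformal factor of the stereographic projection: in
the plane, `ω² / π` is the probability density `e^{-V}` of the Onofri inequality. -/
def bubble (x : E) : ℝ := (1 + ‖x‖ ^ 2)⁻¹

lemma bubble_pos (x : E) : 0 < bubble x := by
  unfold bubble
  positivity

lemma bubble_zero : bubble (0 : E) = 1 := by
  simp [bubble]

lemma bubble_norm (x : E) : bubble ‖x‖ = bubble x := by
  simp only [bubble, norm_norm]

lemma norm_sq_mul_bubble (x : E) : ‖x‖ ^ 2 * bubble x = 1 - bubble x := by
  have : 1 + ‖x‖ ^ 2 ≠ 0 := by positivity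
  unfold bubble
  field_simp
  ring

lemma continuous_bubble : Continuous (bubble : E → ℝ) :=
  Continuous.inv₀ (by fun_prop) fun x => by positivity

variable [InnerProductSpace ℝ E]

lemma contDiff_bubble {n : WithTop ℕ∞} : ContDiff ℝ n (bubble : E → ℝ) :=
  (contDiff_const.add (contDiff_norm_sq ℝ)).inv fun x => by positivity

lemma hasFDerivAt_bubble (x : E) :
    HasFDerivAt bubble (-(2 * bubble x ^ 2) • innerSL ℝ x) x := by
  have hne : 1 + ‖x‖ ^ 2 ≠ 0 := by positivity
  convert! (hasDerivAt_inv hne).comp_hasFDerivAt x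
    ((hasStrictFDerivAt_norm_sq x).hasFDerivAt.const_add 1) using 1
  ext v
  simp only [bubble, inv_pow, neg_smul, neg_apply, smul_apply, coe_innerSL_apply, smul_eq_mul,
    nsmul_eq_mul, Nat.cast_ofNat, neg_inj]
  ring

lemma hasFDerivAt_log_bubble (x : E) :
    HasFDerivAt (fun x => log (bubble x)) (-(2 * bubble x) • innerSL ℝ x) x := by
  convert! (hasFDerivAt_bubble x).log (bubble_pos x).ne' using 1
  rw [smul_smul]
  congr 1
  field_simp [(bubble_pos x).ne']

lemma norm_sub_smul_innerSL_sq [CompleteSpace E] (L : E →L[ℝ] ℝ) (c : ℝ) (x : E) :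
    ‖L - c • innerSL ℝ x‖ ^ 2 = ‖L‖ ^ 2 - 2 * c * L x + c ^ 2 * ‖x‖ ^ 2 := by
  obtain ⟨y, rfl⟩ := (InnerProductSpace.toDual ℝ E).surjective L
  have : InnerProductSpace.toDual ℝ E y - c • innerSL ℝ x =
      InnerProductSpace.toDual ℝ E (y - c • x) := by ext; simp
  rw [this, LinearIsometryEquiv.norm_map, LinearIsometryEquiv.norm_map, norm_sub_sq_real,
    inner_smul_right, norm_smul, mul_pow, norm_eq_abs, sq_abs, InnerProductSpace.toDual_apply_apply]
  ring

lemma integral_bubble_mul_fderiv_apply_self [FiniteDimensional ℝ E] [MeasurableSpace E]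
    [BorelSpace E] (μ : Measure E) [μ.IsAddHaarMeasure] {f : E → ℝ} (hf : ContDiff ℝ 1 f)
    (hsupp : HasCompactSupport f) :
    ∫ x, bubble x * fderiv ℝ f x x ∂μ =
      ∫ x, ((2 - Module.finrank ℝ E) * (f x * bubble x) - 2 * (f x * bubble x ^ 2)) ∂μ := by
  have hfc := hf.continuous
  have := hf.continuous_fderiv one_ne_zero
  have hbubble := continuous_bubble (E := E)
  have hint₁ : Integrable (fun x => f x * bubble x) μ :=
    (hfc.mul hbubble).integrable_of_hasCompactSupport hsupp.mul_right
  have hint₂ : Integrable (fun x => f x * bubble x ^ 2) μ :=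
    (hfc.mul (hbubble.pow 2)).integrable_of_hasCompactSupport hsupp.mul_right
  have hint₃ : Integrable (fun x => bubble x * fderiv ℝ f x x) μ :=
    Continuous.integrable_of_hasCompactSupport (by fun_prop)
      ((hsupp.fderiv (𝕜 := ℝ)).mono fun x hx h0 => hx (by simp [h0]))
  have hderiv : ∀ x, fderiv ℝ (fun x => f x * bubble x) x x =
      bubble x * fderiv ℝ f x x + (2 * (f x * bubble x ^ 2) - 2 * (f x * bubble x)) := fun x => by
    rw [((hf.differentiable one_ne_zero x).hasFDerivAt.fun_mul (hasFDerivAt_bubble x)).fderiv]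
    simp only [neg_smul, smul_neg, add_apply, neg_apply, smul_apply, coe_innerSL_apply,
      real_inner_self_eq_norm_sq, smul_eq_mul]
    linear_combination -2 * bubble x * f x * norm_sq_mul_bubble x
  have hdiv := integral_fderiv_apply_self μ (hf.mul contDiff_bubble) hsupp.mul_right
  simp only [hderiv, smul_eq_mul] at hdiv
  rw [integral_add (by fun_prop) (by fun_prop), integral_sub (by fun_prop) (by fun_prop)] at hdiv
  rw [integral_sub (by fun_prop) (by fun_prop)]
  simp only [integral_const_mul] at hdiv ⊢
  linear_combination hdiv

end Bubble

section Dilation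

variable {E : Type*} [NormedAddCommGroup E] [NormedSpace ℝ E]

lemma sq_mul_bubble_smul_sub (s : ℝ) (x : E) :
    s ^ 2 * bubble (s • x) - bubble x = (s ^ 2 - 1) * (bubble (s • x) * bubble x) := by
  have h₁ : 1 + s ^ 2 * ‖x‖ ^ 2 ≠ 0 := by positivity
  have h₂ : 1 + ‖x‖ ^ 2 ≠ 0 := by positivity
  simp only [bubble, norm_smul, mul_pow, norm_eq_abs, sq_abs]
  field_simp
  ring

variable [FiniteDimensional ℝ E] [MeasurableSpace E] [BorelSpace E] (μ : Measure E)
  [μ.IsAddHaarMeasure]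

lemma integrable_bubble_sq (hE : Module.finrank ℝ E < 4) :
    Integrable (fun x : E => bubble x ^ 2) μ := by
  refine (integrable_rpow_neg_one_add_norm_sq (μ := μ) (r := 4) (mod_cast hE)).congr
    (ae_of_all _ fun x => ?_)
  have h : (0 : ℝ) ≤ 1 + ‖x‖ ^ 2 := by positivity
  dsimp only
  rw [show (-4 / 2 : ℝ) = -((2 : ℕ) : ℝ) by norm_num, rpow_neg h, rpow_natCast, bubble, inv_pow]

lemma integrable_sq_mul_bubble_smul_sub (hE : Module.finrank ℝ E < 4) {s : ℝ} (hs : s ≠ 0) :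
    Integrable (fun x : E => s ^ 2 * bubble (s • x) - bubble x) μ := by
  have hbubble := (memLp_two_iff_integrable_sq continuous_bubble.aestronglyMeasurable).2
    (integrable_bubble_sq μ hE)
  have hdilate := (memLp_two_iff_integrable_sq
    (continuous_bubble.comp (continuous_const_smul s)).aestronglyMeasurable).2
    ((integrable_bubble_sq μ hE).comp_smul hs)
  simpa only [sq_mul_bubble_smul_sub, Pi.mul_apply, Function.comp_apply] using
    (hdilate.integrable_mul hbubble).const_mul (s ^ 2 - 1)

end Dilation

section RadialIntegrals

lemma integral_fun_norm_of_hasDerivAt_of_tendsto {f F : ℝ → ℝ} {l : ℝ}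
    (hf : Integrable fun x : E2 => f ‖x‖)
    (hderiv : ∀ r ∈ Set.Ici (0 : ℝ), HasDerivAt F (r * f r) r)
    (hlim : Tendsto F atTop (nhds l)) : ∫ x : E2, f ‖x‖ = 2 * π * (l - F 0) := by
  have hint := (integrable_fun_norm_addHaar (volume : Measure E2)).1 hf
  simp only [finrank_euclideanSpace, Fintype.card_fin, Nat.add_one_sub_one, pow_one,
    smul_eq_mul] at hint
  rw [← integral_Ioi_of_hasDerivAt_of_tendsto' hderiv hint hlim, integral_fun_norm_addHaar]
  simp only [finrank_euclideanSpace, Fintype.card_fin, Measure.real,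
    EuclideanSpace.volume_ball_fin_two, ENNReal.ofReal_one, one_pow, one_mul, pi_pos.le,
    ENNReal.toReal_ofReal, Nat.add_one_sub_one, pow_one, smul_eq_mul, nsmul_eq_mul, Nat.cast_ofNat]
  ring

lemma hasDerivAt_log_bubble_mul (s r : ℝ) :
    HasDerivAt (fun r : ℝ => log (bubble (s * r))) (-(2 * s ^ 2 * (r * bubble (s * r)))) r := by
  have h := (hasFDerivAt_log_bubble (s * r)).hasDerivAt.comp r ((hasDerivAt_id r).const_mul s)
  convert! h using 1
  simp only [neg_smul, neg_apply, smul_apply, coe_innerSL_apply, RCLike.inner_apply, ringHom_apply,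
    one_mul, smul_eq_mul, mul_one, neg_mul, neg_inj]
  ring

lemma tendsto_bubble_atTop : Tendsto (bubble : ℝ → ℝ) atTop (nhds 0) := by
  have h : Tendsto (fun r : ℝ => 1 + ‖r‖ ^ 2) atTop atTop :=
    tendsto_atTop_add_const_left _ _ ((tendsto_pow_atTop two_ne_zero).comp tendsto_norm_atTop_atTop)
  exact h.inv_tendsto_atTop

lemma integral_bubble_sq : ∫ x : E2, bubble x ^ 2 = π := by
  have hderiv (r : ℝ) : HasDerivAt (fun r : ℝ => -bubble r / 2) (r * bubble r ^ 2) r := by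
    convert! (hasFDerivAt_bubble r).hasDerivAt.neg.div_const 2 using 1
    simp only [neg_smul, neg_apply, smul_apply, coe_innerSL_apply, RCLike.inner_apply,
      ringHom_apply, one_mul, smul_eq_mul, neg_neg]
    ring
  have h := integral_fun_norm_of_hasDerivAt_of_tendsto (f := fun r => bubble r ^ 2)
    (by simpa only [bubble_norm] using integrable_bubble_sq (volume : Measure E2) (by simp))
    (fun r _ => hderiv r) (tendsto_bubble_atTop.neg.div_const 2)
  simp only [bubble_norm] at h
  rw [h, bubble_zero]
  ring

lemma integral_bubble_smul_sq (s : ℝ) : ∫ x : E2, bubble (s • x) ^ 2 = π / s ^ 2 := by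
  rw [Measure.integral_comp_smul volume (fun x : E2 => bubble x ^ 2), integral_bubble_sq,
    finrank_euclideanSpace, Fintype.card_fin, abs_inv, abs_of_nonneg (sq_nonneg s), smul_eq_mul,
    inv_mul_eq_div]

/- `∫ ω` diverges logarithmically in the plane, so the change of variables `x ↦ s x` does not make
this integral vanish: it picks up the contribution of infinity. -/
lemma integral_sq_mul_bubble_smul_sub {s : ℝ} (hs : s ≠ 0) :
    ∫ x : E2, (s ^ 2 * bubble (s • x) - bubble x) = π * log (s ^ 2) := by
  have hderiv (r : ℝ) : HasDerivAt (fun r => (log (bubble r) - log (bubble (s * r))) / 2)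
      (r * (s ^ 2 * bubble (s * r) - bubble r)) r := by
    have h := ((hasDerivAt_log_bubble_mul 1 r).sub (hasDerivAt_log_bubble_mul s r)).div_const 2
    simp only [one_mul] at h
    convert! h using 1
    ring
  have hratio (r : ℝ) : bubble r / bubble (s * r) = s ^ 2 - (s ^ 2 - 1) * bubble r := by
    rw [div_eq_iff (bubble_pos _).ne']
    linear_combination -sq_mul_bubble_smul_sub s r
  have hlim : Tendsto (fun r : ℝ => (log (bubble r) - log (bubble (s * r))) / 2) atTop
      (nhds (log (s ^ 2) / 2)) := by
    have h := (tendsto_bubble_atTop.const_mul (s ^ 2 - 1)).const_sub (s ^ 2)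
    rw [mul_zero, sub_zero] at h
    simpa only [← hratio, log_div (bubble_pos _).ne' (bubble_pos _).ne'] using
      (h.log (pow_ne_zero 2 hs)).div_const 2
  have hradial (x : E2) : s ^ 2 * bubble (s • x) - bubble x =
      s ^ 2 * bubble (s * ‖x‖) - bubble ‖x‖ := by
    simp only [bubble, norm_mul, norm_smul, norm_norm]
  simp only [hradial]
  rw [integral_fun_norm_of_hasDerivAt_of_tendsto (f := fun r => s ^ 2 * bubble (s * r) - bubble r)
    (by simpa only [hradial] using
      integrable_sq_mul_bubble_smul_sub (volume : Measure E2) (by simp) hs)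
    (fun r _ => hderiv r) hlim]
  simp only [mul_zero, sub_self, zero_div, sub_zero]
  ring

end RadialIntegrals

section SquareInequality

variable {g : E2 → ℝ} {R s t : ℝ}

lemma setIntegral_bubble_mul_fderiv_add_eq_zero {S : Set E2} {f : E2 → ℝ} (hf : ContDiff ℝ 1 f)
    (hsupp : HasCompactSupport f) (hfS : tsupport f ⊆ S) :
    ∫ x in S, (bubble x * fderiv ℝ f x x + 2 * (f x * bubble x ^ 2)) = 0 := by
  have hfc := hf.continuous
  have := hf.continuous_fderiv one_ne_zero
  have hbubble := continuous_bubble (E := E2)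
  have hvanish (x : E2) (hx : x ∉ S) :
      bubble x * fderiv ℝ f x x + 2 * (f x * bubble x ^ 2) = 0 := by
    have hx' : x ∉ tsupport f := fun h => hx (hfS h)
    simp [image_eq_zero_of_notMem_tsupport hx', fderiv_of_notMem_tsupport (𝕜 := ℝ) hx']
  have hint₁ : Integrable fun x => bubble x * fderiv ℝ f x x :=
    Continuous.integrable_of_hasCompactSupport (by fun_prop)
      ((hsupp.fderiv (𝕜 := ℝ)).mono fun x hx h0 => hx (by simp [h0]))
  have hint₂ : Integrable fun x => f x * bubble x ^ 2 :=
    Continuous.integrable_of_hasCompactSupport (by fun_prop) hsupp.mul_right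
  rw [setIntegral_eq_integral_of_forall_compl_eq_zero hvanish, integral_add hint₁ (by fun_prop),
    integral_bubble_mul_fderiv_apply_self volume hf hsupp]
  simp only [finrank_euclideanSpace, Fintype.card_fin, Nat.cast_ofNat, sub_self, zero_mul,
    zero_sub, integral_neg, neg_add_cancel]

lemma hasFDerivAt_half_add_log_bubble (hg : ContDiff ℝ 1 g) (ht : 0 < t) (x : E2) :
    HasFDerivAt (fun x => g x / 2 + log (t * bubble x))
      ((2⁻¹ : ℝ) • fderiv ℝ g x - (2 * bubble x) • innerSL ℝ x) x := by
  have hlog (x : E2) : log (t * bubble x) = log t + log (bubble x) :=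
    log_mul ht.ne' (bubble_pos x).ne'
  simp only [hlog]
  convert! ((hg.differentiable one_ne_zero x).hasFDerivAt.mul_const 2⁻¹).add
    ((hasFDerivAt_log_bubble x).const_add (log t)) using 1
  rw [neg_smul, sub_eq_add_neg]

lemma hasFDerivAt_exp_half_sub_one (hg : ContDiff ℝ 1 g) (x : E2) :
    HasFDerivAt (fun x => exp (g x / 2) - 1) ((exp (g x / 2) / 2) • fderiv ℝ g x) x := by
  convert! ((hg.differentiable one_ne_zero x).hasFDerivAt.mul_const 2⁻¹).exp.sub_const 1 using 1
  rw [smul_smul, div_eq_mul_inv, div_eq_mul_inv]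

lemma exp_mul_add_norm_fderiv_sq_eq (hg : ContDiff ℝ 1 g) (ht : 0 < t) (x : E2) :
    exp (g x / 2 + log (t * bubble x)) *
        (2 + fderiv ℝ (fun x => g x / 2 + log (t * bubble x)) x x) +
      ‖fderiv ℝ (fun x => g x / 2 + log (t * bubble x)) x‖ ^ 2 / 4 =
    t * (bubble x * fderiv ℝ (fun x => exp (g x / 2) - 1) x x +
        2 * ((exp (g x / 2) - 1) * bubble x ^ 2)) -
      (bubble x * fderiv ℝ g x x + 2 * (g x * bubble x ^ 2)) / 2 +
      ((2 * t - 1) * bubble x ^ 2 + (‖fderiv ℝ g x‖ ^ 2 / 16 + g x * bubble x ^ 2) +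
        bubble x) := by
  rw [(hasFDerivAt_half_add_log_bubble hg ht x).fderiv, (hasFDerivAt_exp_half_sub_one hg x).fderiv,
    norm_sub_smul_innerSL_sq, exp_add, exp_log (mul_pos ht (bubble_pos x)), norm_smul, mul_pow]
  simp only [sub_apply, smul_apply, coe_innerSL_apply, real_inner_self_eq_norm_sq, smul_eq_mul,
    norm_inv, norm_ofNat]
  linear_combination
    (-2 * exp (g x / 2) * t * bubble x + bubble x) * norm_sq_mul_bubble x

lemma setIntegral_exp_mul_add_norm_fderiv_sq_eq (hg : ContDiff ℝ 1 g) (ht : 0 < t) {S : Set E2}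
    (hS : IsCompact S) (hsupp : HasCompactSupport g) (hgS : tsupport g ⊆ S) :
    ∫ x in S, (exp (g x / 2 + log (t * bubble x)) *
        (2 + fderiv ℝ (fun x => g x / 2 + log (t * bubble x)) x x) +
      ‖fderiv ℝ (fun x => g x / 2 + log (t * bubble x)) x‖ ^ 2 / 4) =
    (2 * t - 1) * (∫ x in S, bubble x ^ 2) +
      (∫ x in S, (‖fderiv ℝ g x‖ ^ 2 / 16 + g x * bubble x ^ 2)) + ∫ x in S, bubble x := by
  have hbubble := continuous_bubble (E := E2)
  have hgc := hg.continuous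
  have := hg.continuous_fderiv one_ne_zero
  have hexp : ContDiff ℝ 1 fun x => exp (g x / 2) - 1 := (hg.div_const 2).exp.sub contDiff_const
  have := hexp.continuous
  have := hexp.continuous_fderiv one_ne_zero
  have hint {u : E2 → ℝ} (hu : Continuous u) : IntegrableOn u S :=
    hu.continuousOn.integrableOn_compact hS
  simp only [exp_mul_add_norm_fderiv_sq_eq hg ht]
  rw [integral_add (hint (by fun_prop)) (hint (by fun_prop)),
    integral_sub (hint (by fun_prop)) (hint (by fun_prop)),
    integral_add (hint (by fun_prop)) (hint hbubble),
    integral_add (hint (by fun_prop)) (hint (by fun_prop)), integral_const_mul, integral_const_mul,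
    integral_div, setIntegral_bubble_mul_fderiv_add_eq_zero hg hsupp hgS,
    setIntegral_bubble_mul_fderiv_add_eq_zero hexp
      (hsupp.comp_left (g := fun y => exp (y / 2) - 1) (by simp))
      ((tsupport_comp_subset (g := fun y => exp (y / 2) - 1) (by simp) g).trans hgS)]
  ring

lemma setIntegral_square_bubble_le (hR : 0 < R) (hs : s ≠ 0) (ht : 0 < t) (hg : ContDiff ℝ 1 g)
    (hsupp : HasCompactSupport g) (hgR : tsupport g ⊆ square R)
    (hmass : t ^ 2 * ∫ x in square R, exp (g x) * bubble x ^ 2 =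
      s ^ 4 * ∫ x in square R, bubble (s • x) ^ 2) :
    (∫ x in square R, (s ^ 2 * bubble (s • x) - bubble x)) +
        s ^ 2 * ∫ x in square R, bubble (s • x) ^ 2 ≤
      (2 * t - 1) * (∫ x in square R, bubble x ^ 2) +
        ∫ x in square R, (‖fderiv ℝ g x‖ ^ 2 / 16 + g x * bubble x ^ 2) := by
  have hbubble := continuous_bubble (E := E2)
  have hint {u : E2 → ℝ} (hu : Continuous u) : IntegrableOn u (square R) :=
    hu.continuousOn.integrableOn_compact (isCompact_square R)
  have hpos (x : E2) : 0 < t * bubble x := mul_pos ht (bubble_pos x)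
  have hpos_s (x : E2) : 0 < s ^ 2 * bubble (s • x) := mul_pos (by positivity) (bubble_pos _)
  have hexp_two_mul_log {y : ℝ} (hy : 0 < y) : exp (2 * log y) = y ^ 2 := by
    rw [two_mul, exp_add, exp_log hy, sq]
  have hleft (x : E2) : 2 * exp (log (s ^ 2 * bubble (s • x))) -
      ‖x‖ ^ 2 * exp (2 * log (s ^ 2 * bubble (s • x))) =
        s ^ 2 * bubble (s • x) + s ^ 2 * bubble (s • x) ^ 2 := by
    have h := norm_sq_mul_bubble (s • x)
    rw [norm_smul, mul_pow, norm_eq_abs, sq_abs] at h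
    rw [hexp_two_mul_log (hpos_s x), exp_log (hpos_s x)]
    linear_combination -s ^ 2 * bubble (s • x) * h
  have hmass' : ∫ x in square R, exp (2 * (g x / 2 + log (t * bubble x))) =
      ∫ x in square R, exp (2 * log (s ^ 2 * bubble (s • x))) := by
    simp only [mul_add, mul_div_cancel₀ _ (two_ne_zero' ℝ), exp_add, hexp_two_mul_log, hpos, hpos_s,
      mul_pow, mul_left_comm _ (t ^ 2), ← pow_mul, integral_const_mul, hmass]
  have h := setIntegral_square_exp_sub_le hR
    ((hg.div_const 2).add ((contDiff_const.mul contDiff_bubble).log fun x => (hpos x).ne'))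
    (Continuous.log (by fun_prop) fun x => (hpos_s x).ne') hmass'
  simp only [hleft] at h
  rw [setIntegral_exp_mul_add_norm_fderiv_sq_eq hg ht (isCompact_square R) hsupp hgR,
    integral_add (hint (by fun_prop)) (hint (by fun_prop)),
    integral_const_mul _ fun x => bubble (s • x) ^ 2] at h
  rw [integral_sub (hint (by fun_prop)) (hint (by fun_prop))]
  linarith

end SquareInequality

section Onofri

variable {g : E2 → ℝ}

lemma integrable_norm_fderiv_sq (hg : ContDiff ℝ 1 g) (hsupp : HasCompactSupport g) :
    Integrable fun x => ‖fderiv ℝ g x‖ ^ 2 := by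
  have := hg.continuous_fderiv one_ne_zero
  exact Continuous.integrable_of_hasCompactSupport (by fun_prop)
    ((hsupp.fderiv ℝ).comp_left (g := fun L => ‖L‖ ^ 2) (by simp))

lemma integrable_mul_bubble_sq (hg : Continuous g) (hsupp : HasCompactSupport g) :
    Integrable fun x => g x * bubble x ^ 2 :=
  (hg.mul (continuous_bubble.pow 2)).integrable_of_hasCompactSupport hsupp.mul_right

lemma integrable_exp_mul_bubble_sq (hg : Continuous g) (hsupp : HasCompactSupport g) :
    Integrable fun x => exp (g x) * bubble x ^ 2 := by
  obtain ⟨C, hC⟩ := hsupp.exists_bound_of_continuous hg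
  refine (integrable_bubble_sq volume (by simp)).bdd_mul (c := exp C) (by fun_prop)
    (ae_of_all _ fun x => ?_)
  rw [norm_of_nonneg (exp_pos _).le]
  exact exp_le_exp.2 ((le_abs_self _).trans (hC x))

lemma pi_mul_log_sq_le {s : ℝ} (hs : s ≠ 0) (hg : ContDiff ℝ 1 g) (hsupp : HasCompactSupport g)
    (hmass : ∫ x, exp (g x) * bubble x ^ 2 = π * s ^ 2) :
    π * log (s ^ 2) ≤ (∫ x, ‖fderiv ℝ g x‖ ^ 2) / 16 + ∫ x, g x * bubble x ^ 2 := by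
  have hlim {u : E2 → ℝ} (hu : Integrable u) :
      Tendsto (fun R => ∫ x in square R, u x) atTop (nhds (∫ x, u x)) :=
    aecover_square.integral_tendsto_of_countably_generated hu
  have hbubble := integrable_bubble_sq (volume : Measure E2) (by simp)
  have hdilate := hlim (hbubble.comp_smul hs)
  have hexp := hlim (integrable_exp_mul_bubble_sq hg.continuous hsupp)
  have hD := (integrable_norm_fderiv_sq hg hsupp).div_const 16
  have hG := integrable_mul_bubble_sq hg.continuous hsupp
  rw [integral_bubble_smul_sq] at hdilate
  rw [hmass] at hexp
  let t := fun R => √(s ^ 4 * (∫ x in square R, bubble (s • x) ^ 2) /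
    ∫ x in square R, exp (g x) * bubble x ^ 2)
  have ht : Tendsto t atTop (nhds 1) := by
    have h := ((hdilate.const_mul (s ^ 4)).div hexp (by positivity)).sqrt
    rwa [show s ^ 4 * (π / s ^ 2) / (π * s ^ 2) = 1 by field_simp, sqrt_one] at h
  have hle := le_of_tendsto_of_tendsto
    ((hlim (integrable_sq_mul_bubble_smul_sub volume (by simp) hs)).add
      (hdilate.const_mul (s ^ 2)))
    ((((ht.const_mul 2).sub_const 1).mul (hlim hbubble)).add (hlim (hD.fun_add hG))) <| by
    filter_upwards [eventually_gt_atTop 0, eventually_subset_square hsupp.isCompact,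
      ht.eventually_const_lt one_pos, hexp.eventually_const_lt (by positivity)]
      with R hR hsub htR hexpR
    refine setIntegral_square_bubble_le hR hs htR hg hsupp hsub ?_
    rw [sq_sqrt (sqrt_pos.1 htR).le, div_mul_cancel₀ _ hexpR.ne']
  rw [integral_sq_mul_bubble_smul_sub hs, integral_bubble_sq, integral_add hD hG, integral_div,
    mul_div_cancel₀ _ (by positivity)] at hle
  linarith

lemma exp_neg_Vpot (x : E2) : exp (-Vpot x) = π⁻¹ * bubble x ^ 2 := by
  have h : 0 < 1 + ‖x‖ ^ 2 := by positivity
  rw [Vpot, neg_add, exp_add, exp_neg (log π), exp_log pi_pos, mul_comm, bubble, inv_pow, exp_neg,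
    two_mul, exp_add, exp_log h, sq (1 + ‖x‖ ^ 2)]

end Onofri

theorem onofri_type_inequality_general {g : E2 → ℝ} (hg : ContDiff ℝ 1 g)
    (hsupp : HasCompactSupport g) :
    log (∫ x, exp (g x - Vpot x)) ≤
      1 / (16 * π) * (∫ x, ‖fderiv ℝ g x‖ ^ 2) + ∫ x, g x * exp (-Vpot x) := by
  have hpos : 0 < ∫ x, exp (g x) * bubble x ^ 2 :=
    integral_pos_of_integrable_nonneg_nonzero (x := 0)
      (hg.continuous.rexp.mul (continuous_bubble.pow 2))
      (integrable_exp_mul_bubble_sq hg.continuous hsupp) (fun x => by positivity)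
      (mul_pos (exp_pos _) (pow_pos (bubble_pos _) 2)).ne'
  have hsq : √(π⁻¹ * ∫ x, exp (g x) * bubble x ^ 2) ^ 2 = π⁻¹ * ∫ x, exp (g x) * bubble x ^ 2 :=
    sq_sqrt (by positivity)
  have hle := pi_mul_log_sq_le (s := √(π⁻¹ * ∫ x, exp (g x) * bubble x ^ 2)) (by positivity)
    hg hsupp (by rw [hsq, mul_inv_cancel_left₀ pi_ne_zero])
  simp only [sub_eq_add_neg, exp_add, exp_neg_Vpot, mul_left_comm _ π⁻¹, integral_const_mul]
  rw [← hsq]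
  refine le_of_mul_le_mul_left (hle.trans_eq ?_) pi_pos
  field_simp

/-- Onofri-type dual inequality for α ∈ [0,1). -/
theorem onofri_type_inequality (α : ℝ) (hα0 : 0 ≤ α) (hα1 : α < 1)
    (g : E2 → ℝ) (hg : ContDiff ℝ (⊤ : ℕ∞) g) (hsupp : HasCompactSupport g) :
    Real.log (∫ x, Real.exp (g x - Vpot x))
      ≤ (1 / (16 * π * (1 - α))) * (∫ x, ‖fderiv ℝ g x‖ ^ 2)
          + ∫ x, g x * Real.exp (-Vpot x) := by
  have : 0 < 1 - α := sub_pos.2 hα1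
  have hle : 16 * π * (1 - α) ≤ 16 * π :=
    mul_le_of_le_one_right (by positivity) (sub_le_self 1 hα0)
  refine (onofri_type_inequality_general (hg.of_le (by simp)) hsupp).trans ?_
  gcongr
end
end

section
/- For the probability density μ(x) = 1/(π(1+|x|²)²) on ℝ² one has ∫_{ℝ²} μ log μ dx = −2 − log π and ∬_{ℝ²×ℝ²} μ(x) μ(y) log|x−y| dx dy = 1/2; in particular μ realizes the equality case of the logarithmic Hardy–Littlewood–Sobolev inequality: ∫_{ℝ²} μ log μ dx + 2 ∬_{ℝ²×ℝ²} μ(x) μ(y) log|x−y| dx dy + 1 + log π = 0. -/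
open MeasureTheory Real Filter

noncomputable section

/-!
By rotation invariance the logarithmic potential `U x = ∫ μ y log ‖x - y‖ dy` only sees the circle
averages of `log ‖x - ·‖`, and by Jensen's formula the average over the circle of radius `r` about
the origin is `log (max ‖x‖ r)`: this is Newton's theorem in the plane. What remains is an integral
against the law `2r / (1 + r²)² dr` of `‖·‖` under `μ`, whose distribution function is
`r² / (1 + r²)`; integrating by parts gives `U x = log (1 + ‖x‖²) / 2`, that is, `U` is an affine
function of `log μ`. Both the entropy and the interaction energy thereby reduce to
`∫ μ x log (1 + ‖x‖²) dx = 1`.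
-/

open Set Topology

section CircleAverage

variable {F : Type*} [NormedAddCommGroup F] [NormedSpace ℝ F]

lemma integrableOn_comp_complex_polarCoord_symm {f : ℂ → F} (hf : Integrable f) :
    IntegrableOn (fun p : ℝ × ℝ ↦ p.1 • f (Complex.polarCoord.symm p)) polarCoord.target := by
  have hf' : Integrable (f ∘ Complex.measurableEquivRealProd.symm) :=
    Complex.volume_preserving_equiv_real_prod.symm.integrable_comp_of_integrable hf
  have hpolar := (integrableOn_image_iff_integrableOn_abs_det_fderiv_smul volume
    polarCoord.open_target.measurableSet
    (fun p _ ↦ (hasFDerivAt_polarCoord_symm p).hasFDerivWithinAt) polarCoord.symm.injOn _).1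
    (hf'.integrableOn (s := polarCoord.symm '' polarCoord.target))
  refine hpolar.congr_fun (fun p hp ↦ ?_) polarCoord.open_target.measurableSet
  simp only [det_fderivPolarCoordSymm, abs_of_pos (show 0 < p.1 from hp.1), Function.comp_apply,
    Complex.measurableEquivRealProd_symm_polarCoord_symm_apply]

lemma circleAverage_eq_integral_Ioo (f : ℂ → F) (c : ℂ) (R : ℝ) :
    circleAverage f c R = (2 * π)⁻¹ • ∫ θ in Ioo (-π) π, f (circleMap c R θ) := by
  rw [circleAverage_eq_integral_add (-π),
    intervalIntegral.integral_comp_add_right (fun θ ↦ f (circleMap c R θ)), zero_add,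
    show 2 * π + -π = π by ring, intervalIntegral.integral_of_le (by linarith [pi_pos]),
    integral_Ioc_eq_integral_Ioo]

lemma integral_eq_integral_Ioi_circleAverage {f : ℂ → F} (hf : Integrable f) :
    ∫ z, f z = (2 * π) • ∫ r in Ioi (0 : ℝ), r • circleAverage f 0 r := by
  have hpolar := integrableOn_comp_complex_polarCoord_symm hf
  rw [polarCoord_target, Measure.volume_eq_prod] at hpolar
  rw [← Complex.integral_comp_polarCoord_symm, polarCoord_target, Measure.volume_eq_prod,
    setIntegral_prod _ hpolar, ← integral_smul]
  congr 1 with r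
  have hpi : 2 * π ≠ 0 := by positivity
  rw [circleAverage_eq_integral_Ioo, smul_comm (2 * π), smul_inv_smul₀ hpi, ← integral_smul]
  simp [circleMap, Complex.exp_mul_I]

lemma circleAverage_log_norm_sub_const_eq_log_max (a c : ℂ) {R : ℝ} (hR : 0 < R) :
    circleAverage (log ‖· - a‖) c R = log (max ‖c - a‖ R) := by
  rw [circleAverage_log_norm_sub_const_eq_log_radius_add_posLog hR.ne',
    posLog_eq_log_max_one (by positivity), ← log_mul hR.ne' (by positivity),
    mul_max_of_nonneg _ _ hR.le, mul_one, mul_inv_cancel_left₀ hR.ne', max_comm]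

lemma integral_complex_radial_mul_log_norm_sub {w : ℝ → ℝ} (a : ℂ)
    (hw : Integrable fun z : ℂ ↦ w ‖z‖ * log ‖z - a‖) :
    ∫ z : ℂ, w ‖z‖ * log ‖z - a‖ =
      2 * π * ∫ r in Ioi (0 : ℝ), r * (w r * log (max ‖a‖ r)) := by
  rw [integral_eq_integral_Ioi_circleAverage hw, smul_eq_mul]
  congr 1
  refine setIntegral_congr_fun measurableSet_Ioi fun r (hr : 0 < r) ↦ ?_
  have hradial : EqOn (fun z : ℂ ↦ w ‖z‖ * log ‖z - a‖) (fun z ↦ w r • log ‖z - a‖)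
      (Metric.sphere 0 |r|) := fun z hz ↦ by
    rw [mem_sphere_zero_iff_norm, abs_of_pos hr] at hz
    simp only [hz, smul_eq_mul]
  simp only [smul_eq_mul]
  rw [circleAverage_congr_sphere hradial, circleAverage_fun_smul,
    circleAverage_log_norm_sub_const_eq_log_max a 0 hr, zero_sub, norm_neg, smul_eq_mul]

end CircleAverage

section RadialPlane

lemma integral_comp_norm_plane (g : ℝ → ℝ) :
    ∫ x : E2, g ‖x‖ = 2 * π * ∫ r in Ioi (0 : ℝ), r * g r := by
  rw [integral_fun_norm_addHaar volume g]
  simp [Measure.real, EuclideanSpace.volume_ball_fin_two, pi_nonneg, mul_assoc]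

lemma integrable_comp_norm_plane_iff (g : ℝ → ℝ) :
    Integrable (fun x : E2 ↦ g ‖x‖) ↔ IntegrableOn (fun r ↦ r * g r) (Ioi 0) := by
  rw [integrable_fun_norm_addHaar volume (f := g)]
  simp

lemma integral_radial_mul_log_norm_sub {w : ℝ → ℝ} (x : E2)
    (hw : Integrable fun y : E2 ↦ w ‖y‖ * log ‖x - y‖) :
    ∫ y : E2, w ‖y‖ * log ‖x - y‖ = ∫ y : E2, w ‖y‖ * log (max ‖x‖ ‖y‖) := by
  let e : ℂ ≃ₗᵢ[ℝ] E2 := Complex.orthonormalBasisOneI.repr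
  have hkernel (z : ℂ) : w ‖e z‖ * log ‖x - e z‖ = w ‖z‖ * log ‖z - e.symm x‖ := by
    rw [e.norm_map, norm_sub_rev, ← e.norm_map (z - e.symm x), map_sub, e.apply_symm_apply]
  have hw' : Integrable fun z : ℂ ↦ w ‖z‖ * log ‖z - e.symm x‖ := by
    simpa only [Function.comp_def, hkernel] using
      e.measurePreserving.integrable_comp_of_integrable hw
  calc ∫ y : E2, w ‖y‖ * log ‖x - y‖
      = ∫ z : ℂ, w ‖z‖ * log ‖z - e.symm x‖ := by
        simp only [← e.measurePreserving.integral_comp e.toMeasurableEquiv.measurableEmbedding,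
          hkernel]
    _ = 2 * π * ∫ r in Ioi (0 : ℝ), r * (w r * log (max ‖x‖ r)) := by
        rw [integral_complex_radial_mul_log_norm_sub _ hw', e.symm.norm_map]
    _ = ∫ y : E2, w ‖y‖ * log (max ‖x‖ ‖y‖) :=
        (integral_comp_norm_plane fun r ↦ w r * log (max ‖x‖ r)).symm

end RadialPlane

section LogKernel

lemma abs_log_eq_posLog_add_posLog_inv (t : ℝ) : |log t| = log⁺ t + log⁺ t⁻¹ := by
  linarith [half_mul_log_add_log_abs (x := t), posLog_sub_posLog_inv (x := t)]

lemma abs_log_norm_sub_le {E : Type*} [SeminormedAddCommGroup E] (x y : E) :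
    |log ‖x - y‖| ≤ log 2 + log⁺ ‖x‖ + log⁺ ‖y‖ + log⁺ ‖x - y‖⁻¹ := by
  have h := posLog_norm_add_le x (-y)
  rw [norm_neg, ← sub_eq_add_neg] at h
  rw [abs_log_eq_posLog_add_posLog_inv]
  linarith

lemma integrableOn_posLog_inv_Ioi : IntegrableOn (fun r : ℝ ↦ log⁺ r⁻¹) (Ioi 0) := by
  rw [← Ioc_union_Ioi_eq_Ioi zero_le_one]
  refine IntegrableOn.union ?_ ?_
  · refine IntegrableOn.congr_fun intervalIntegral.intervalIntegrable_log'.1.neg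
      (fun r hr ↦ ?_) measurableSet_Ioc
    rw [posLog_apply, log_inv, max_eq_right (neg_nonneg.2 (log_nonpos hr.1.le hr.2)), Pi.neg_apply]
  · refine integrableOn_zero.congr_fun (fun r (hr : 1 < r) ↦ ?_) measurableSet_Ioi
    rw [posLog_apply, log_inv, max_eq_left (neg_nonpos.2 (log_nonneg hr.le))]

variable {E : Type*} [NormedAddCommGroup E] [NormedSpace ℝ E] [FiniteDimensional ℝ E]
  [MeasurableSpace E] [BorelSpace E] {ν : Measure E} [ν.IsAddHaarMeasure]

lemma integrable_posLog_inv_norm : Integrable (fun x : E ↦ log⁺ ‖x‖⁻¹) ν := by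
  rcases subsingleton_or_nontrivial E with _ | _
  · simp [Subsingleton.elim _ (0 : E)]
  · rw [integrable_fun_norm_addHaar ν (f := fun r ↦ log⁺ r⁻¹)]
    refine integrableOn_posLog_inv_Ioi.mono' (by fun_prop) ?_
    filter_upwards [ae_restrict_mem measurableSet_Ioi] with r (hr : 0 < r)
    rw [smul_eq_mul, norm_eq_abs, abs_of_nonneg (mul_nonneg (by positivity) posLog_nonneg)]
    rcases le_total r 1 with h | h
    · exact mul_le_of_le_one_left posLog_nonneg (pow_le_one₀ hr.le h)
    · have hinv : |r⁻¹| ≤ 1 := by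
        rw [abs_of_pos (inv_pos.2 hr)]
        exact inv_le_one_of_one_le₀ h
      rw [(posLog_eq_zero_iff _).2 hinv, mul_zero]

variable {f g : E → ℝ} {C : ℝ}

lemma integrable_mul_log_norm_sub (hf_le : ∀ x, |f x| ≤ C) (hf : Integrable f ν)
    (hf_log : Integrable (fun x ↦ f x * log⁺ ‖x‖) ν) (x : E) :
    Integrable (fun y ↦ f y * log ‖x - y‖) ν := by
  have hmeas : Measurable fun y ↦ log ‖x - y‖ := by fun_prop
  have hsing : Integrable (fun y ↦ log⁺ ‖x - y‖⁻¹) ν := integrable_posLog_inv_norm.comp_sub_left x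
  refine (((hf.abs.mul_const (log 2 + log⁺ ‖x‖)).add hf_log.abs).add (hsing.const_mul C)).mono'
    (hf.aestronglyMeasurable.mul hmeas.aestronglyMeasurable) (ae_of_all _ fun y ↦ ?_)
  simp only [Pi.add_apply, norm_eq_abs, abs_mul, abs_of_nonneg (posLog_nonneg (x := ‖y‖))]
  linarith [mul_le_mul_of_nonneg_left (abs_log_norm_sub_le x y) (abs_nonneg (f y)),
    mul_le_mul_of_nonneg_right (hf_le y) (posLog_nonneg (x := ‖x - y‖⁻¹))]

lemma integrable_mul_mul_log_norm_sub (hf_le : ∀ x, |f x| ≤ C) (hf : Integrable f ν)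
    (hf_log : Integrable (fun x ↦ f x * log⁺ ‖x‖) ν) (hg : Integrable g ν)
    (hg_log : Integrable (fun x ↦ g x * log⁺ ‖x‖) ν) :
    Integrable (fun p : E × E ↦ f p.1 * g p.2 * log ‖p.1 - p.2‖) (ν.prod ν) := by
  have hmeas : Measurable fun p : E × E ↦ log ‖p.1 - p.2‖ := by fun_prop
  have hsing : Integrable (fun p : E × E ↦ |g p.2| * log⁺ ‖p.1 - p.2‖⁻¹) (ν.prod ν) :=
    hg.abs.convolution_integrand (ContinuousLinearMap.mul ℝ ℝ) integrable_posLog_inv_norm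
  refine (((((hf.mul_prod hg).abs.const_mul (log 2)).add (hf_log.mul_prod hg).abs).add
    (hf.mul_prod hg_log).abs).add (hsing.const_mul C)).mono'
    ((hf.mul_prod hg).aestronglyMeasurable.mul hmeas.aestronglyMeasurable) (ae_of_all _ fun p ↦ ?_)
  simp only [Pi.add_apply, norm_eq_abs, abs_mul, abs_of_nonneg (posLog_nonneg (x := ‖_‖))]
  have hnear : |f p.1| * (|g p.2| * log⁺ ‖p.1 - p.2‖⁻¹) ≤ C * (|g p.2| * log⁺ ‖p.1 - p.2‖⁻¹) :=
    mul_le_mul_of_nonneg_right (hf_le p.1) (mul_nonneg (abs_nonneg _) posLog_nonneg)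
  linarith [mul_le_mul_of_nonneg_left (abs_log_norm_sub_le p.1 p.2)
    (mul_nonneg (abs_nonneg (f p.1)) (abs_nonneg (g p.2)))]

end LogKernel

section RadialLaw

/-- The density `2πr μ(r) = 2r / (1 + r²)²` of the law of `‖·‖` under `μ`, on the half-line. -/
def muRadial (r : ℝ) : ℝ := 2 * r / (1 + r ^ 2) ^ 2

lemma muRadial_nonneg {r : ℝ} (hr : 0 ≤ r) : 0 ≤ muRadial r := by
  unfold muRadial
  positivity

lemma continuous_muRadial : Continuous muRadial := by
  unfold muRadial
  exact Continuous.div (by fun_prop) (by fun_prop) fun r ↦ by positivity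

lemma hasDerivAt_one_add_sq (r : ℝ) : HasDerivAt (fun r : ℝ ↦ 1 + r ^ 2) (2 * r) r := by
  simpa using (hasDerivAt_pow 2 r).const_add 1

lemma tendsto_one_add_sq_atTop : Tendsto (fun r : ℝ ↦ 1 + r ^ 2) atTop atTop :=
  tendsto_atTop_add_const_left _ _ (tendsto_pow_atTop two_ne_zero)

lemma tendsto_log_div_self_atTop : Tendsto (fun t : ℝ ↦ log t / t) atTop (𝓝 0) :=
  isLittleO_log_id_atTop.tendsto_div_nhds_zero

lemma hasDerivAt_sq_div_one_add_sq (r : ℝ) :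
    HasDerivAt (fun r : ℝ ↦ r ^ 2 / (1 + r ^ 2)) (muRadial r) r := by
  have h : 1 + r ^ 2 ≠ 0 := by positivity
  convert! (hasDerivAt_pow 2 r).div (hasDerivAt_one_add_sq r) h using 1
  unfold muRadial
  field_simp
  ring

lemma tendsto_sq_div_one_add_sq_atTop :
    Tendsto (fun r : ℝ ↦ r ^ 2 / (1 + r ^ 2)) atTop (𝓝 1) := by
  have h := (tendsto_inv_atTop_zero.comp tendsto_one_add_sq_atTop).const_sub 1
  rw [sub_zero] at h
  refine h.congr fun r ↦ ?_
  have : 1 + r ^ 2 ≠ 0 := by positivity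
  simp only [Function.comp_apply]
  field_simp
  ring

lemma integrableOn_muRadial : IntegrableOn muRadial (Ioi 0) :=
  integrableOn_Ioi_deriv_of_nonneg' (fun r _ ↦ hasDerivAt_sq_div_one_add_sq r)
    (fun _ hr ↦ muRadial_nonneg (le_of_lt hr)) tendsto_sq_div_one_add_sq_atTop

lemma integral_Ioi_muRadial : ∫ r in Ioi 0, muRadial r = 1 := by
  rw [integral_Ioi_of_hasDerivAt_of_tendsto' (fun r _ ↦ hasDerivAt_sq_div_one_add_sq r)
    integrableOn_muRadial tendsto_sq_div_one_add_sq_atTop]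
  norm_num

lemma integral_Ioc_muRadial {a : ℝ} (ha : 0 ≤ a) :
    ∫ r in Ioc 0 a, muRadial r = a ^ 2 / (1 + a ^ 2) := by
  rw [← intervalIntegral.integral_of_le ha, intervalIntegral.integral_eq_sub_of_hasDerivAt
    (fun r _ ↦ hasDerivAt_sq_div_one_add_sq r) (continuous_muRadial.intervalIntegrable 0 a)]
  simp

lemma hasDerivAt_primitive_muRadial_mul_log_one_add_sq (r : ℝ) :
    HasDerivAt (fun r : ℝ ↦ -(log (1 + r ^ 2) / (1 + r ^ 2) + (1 + r ^ 2)⁻¹))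
      (muRadial r * log (1 + r ^ 2)) r := by
  have h : 1 + r ^ 2 ≠ 0 := by positivity
  have hd := hasDerivAt_one_add_sq r
  convert! (((hd.log h).div hd h).add (hd.inv h)).neg using 1
  unfold muRadial
  field_simp
  ring

lemma tendsto_primitive_muRadial_mul_log_one_add_sq :
    Tendsto (fun r : ℝ ↦ -(log (1 + r ^ 2) / (1 + r ^ 2) + (1 + r ^ 2)⁻¹)) atTop (𝓝 0) := by
  simpa using ((tendsto_log_div_self_atTop.add tendsto_inv_atTop_zero).comp
    tendsto_one_add_sq_atTop).neg

lemma log_one_add_sq_nonneg (r : ℝ) : 0 ≤ log (1 + r ^ 2) :=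
  log_nonneg (le_add_of_nonneg_right (sq_nonneg r))

lemma integrableOn_muRadial_mul_log_one_add_sq :
    IntegrableOn (fun r ↦ muRadial r * log (1 + r ^ 2)) (Ioi 0) :=
  integrableOn_Ioi_deriv_of_nonneg' (fun r _ ↦ hasDerivAt_primitive_muRadial_mul_log_one_add_sq r)
    (fun r hr ↦ mul_nonneg (muRadial_nonneg (le_of_lt hr)) (log_one_add_sq_nonneg r))
    tendsto_primitive_muRadial_mul_log_one_add_sq

lemma integral_muRadial_mul_log_one_add_sq :
    ∫ r in Ioi 0, muRadial r * log (1 + r ^ 2) = 1 := by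
  rw [integral_Ioi_of_hasDerivAt_of_tendsto'
    (fun r _ ↦ hasDerivAt_primitive_muRadial_mul_log_one_add_sq r)
    integrableOn_muRadial_mul_log_one_add_sq tendsto_primitive_muRadial_mul_log_one_add_sq]
  norm_num

lemma hasDerivAt_primitive_muRadial_mul_log {r : ℝ} (hr : 0 < r) :
    HasDerivAt (fun r : ℝ ↦ r ^ 2 / (1 + r ^ 2) * log r - log (1 + r ^ 2) / 2)
      (muRadial r * log r) r := by
  have h : 1 + r ^ 2 ≠ 0 := by positivity
  convert! ((hasDerivAt_sq_div_one_add_sq r).mul (hasDerivAt_log hr.ne')).sub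
    (((hasDerivAt_one_add_sq r).log h).div_const 2) using 1
  field_simp
  ring

lemma continuous_primitive_muRadial_mul_log :
    Continuous fun r : ℝ ↦ r ^ 2 / (1 + r ^ 2) * log r - log (1 + r ^ 2) / 2 := by
  have hpos (r : ℝ) : 1 + r ^ 2 ≠ 0 := by positivity
  have hlog : Continuous fun r : ℝ ↦ r * (r * log r) / (1 + r ^ 2) :=
    (continuous_id.mul continuous_mul_log).div (by fun_prop) hpos
  have hlog' : Continuous fun r : ℝ ↦ log (1 + r ^ 2) / 2 :=
    (Continuous.log (by fun_prop) hpos).div_const 2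
  refine (hlog.sub hlog').congr fun r ↦ ?_
  simp only [Pi.sub_apply]
  ring

lemma tendsto_primitive_muRadial_mul_log :
    Tendsto (fun r : ℝ ↦ r ^ 2 / (1 + r ^ 2) * log r - log (1 + r ^ 2) / 2) atTop (𝓝 0) := by
  have hsq : Tendsto (fun r : ℝ ↦ r ^ 2 / (1 + r ^ 2) * (log r / r * r⁻¹)) atTop (𝓝 0) := by
    simpa using tendsto_sq_div_one_add_sq_atTop.mul
      (tendsto_log_div_self_atTop.mul tendsto_inv_atTop_zero)
  have hratio : Tendsto (fun r : ℝ ↦ log (r ^ 2 / (1 + r ^ 2)) / 2) atTop (𝓝 0) := by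
    simpa using ((continuousAt_log one_ne_zero).tendsto.comp
      tendsto_sq_div_one_add_sq_atTop).div_const 2
  have h := hratio.sub hsq
  rw [sub_zero] at h
  refine h.congr' ?_
  filter_upwards [eventually_gt_atTop 0] with r hr
  rw [log_div (by positivity) (by positivity), log_pow]
  push_cast
  field_simp
  ring

end RadialLaw

section Mu

lemma mu2_nonneg (x : E2) : 0 ≤ mu2 x := by
  unfold mu2
  positivity

lemma mu2_le_one (x : E2) : mu2 x ≤ 1 := by
  unfold mu2
  rw [div_le_one (by positivity)]
  exact one_le_mul_of_one_le_of_one_le (by linarith [pi_gt_three])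
    (one_le_pow₀ (le_add_of_nonneg_right (sq_nonneg ‖x‖)))

lemma abs_mu2_le_one (x : E2) : |mu2 x| ≤ 1 :=
  (abs_of_nonneg (mu2_nonneg x)).trans_le (mu2_le_one x)

lemma log_mu2 (x : E2) : log (mu2 x) = -Vpot x := by
  unfold mu2 Vpot
  rw [one_div, log_inv, log_mul (by positivity) (by positivity), log_pow]
  push_cast
  ring

lemma muRadial_eq_two_pi_mul (r : ℝ) : muRadial r = 2 * π * (r * (1 / (π * (1 + r ^ 2) ^ 2))) := by
  unfold muRadial
  field_simp

lemma integral_mu2_mul_comp_norm (g : ℝ → ℝ) :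
    ∫ x : E2, mu2 x * g ‖x‖ = ∫ r in Ioi 0, muRadial r * g r := by
  refine (integral_comp_norm_plane fun r ↦ 1 / (π * (1 + r ^ 2) ^ 2) * g r).trans ?_
  simp only [← integral_const_mul, muRadial_eq_two_pi_mul, mul_assoc]

lemma integrable_mu2_mul_comp_norm_iff (g : ℝ → ℝ) :
    Integrable (fun x : E2 ↦ mu2 x * g ‖x‖) ↔ IntegrableOn (fun r ↦ muRadial r * g r) (Ioi 0) := by
  refine (integrable_comp_norm_plane_iff fun r ↦ 1 / (π * (1 + r ^ 2) ^ 2) * g r).trans ?_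
  have hpi : IsUnit (2 * π) := (by positivity : 2 * π ≠ 0).isUnit
  simp only [muRadial_eq_two_pi_mul, mul_assoc (2 * π)]
  rw [IntegrableOn, IntegrableOn, integrable_const_mul_iff hpi]
  simp only [mul_assoc]

lemma integrable_mu2 : Integrable mu2 := by
  simpa using (integrable_mu2_mul_comp_norm_iff fun _ ↦ 1).2 (by simpa using integrableOn_muRadial)

lemma integral_mu2 : ∫ x, mu2 x = 1 := by
  simpa [integral_Ioi_muRadial] using integral_mu2_mul_comp_norm fun _ ↦ 1

lemma integrable_mu2_mul_log_one_add_sq : Integrable fun x : E2 ↦ mu2 x * log (1 + ‖x‖ ^ 2) :=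
  (integrable_mu2_mul_comp_norm_iff fun r ↦ log (1 + r ^ 2)).2
    integrableOn_muRadial_mul_log_one_add_sq

lemma integral_mu2_mul_log_one_add_sq : ∫ x : E2, mu2 x * log (1 + ‖x‖ ^ 2) = 1 :=
  (integral_mu2_mul_comp_norm fun r ↦ log (1 + r ^ 2)).trans integral_muRadial_mul_log_one_add_sq

lemma posLog_le_log_one_add_sq (r : ℝ) : log⁺ r ≤ log (1 + r ^ 2) := by
  rw [← posLog_abs, posLog_eq_log_max_one (abs_nonneg r)]
  refine log_le_log (by positivity) (max_le (by nlinarith [sq_nonneg r]) ?_)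
  nlinarith [sq_nonneg (|r| - 1), sq_abs r, abs_nonneg r]

lemma integrable_mu2_mul_posLog_norm : Integrable fun x : E2 ↦ mu2 x * log⁺ ‖x‖ := by
  refine integrable_mu2_mul_log_one_add_sq.mono'
    (integrable_mu2.aestronglyMeasurable.mul (by fun_prop)) (ae_of_all _ fun x ↦ ?_)
  rw [norm_eq_abs, abs_of_nonneg (mul_nonneg (mu2_nonneg x) posLog_nonneg)]
  exact mul_le_mul_of_nonneg_left (posLog_le_log_one_add_sq ‖x‖) (mu2_nonneg x)

lemma integrable_mu2_mul_log_norm_sub (x : E2) : Integrable fun y ↦ mu2 y * log ‖x - y‖ :=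
  integrable_mul_log_norm_sub abs_mu2_le_one integrable_mu2 integrable_mu2_mul_posLog_norm x

lemma integrable_mu2_mul_mu2_mul_log_norm_sub :
    Integrable fun p : E2 × E2 ↦ mu2 p.1 * mu2 p.2 * log ‖p.1 - p.2‖ :=
  integrable_mul_mul_log_norm_sub abs_mu2_le_one integrable_mu2 integrable_mu2_mul_posLog_norm
    integrable_mu2 integrable_mu2_mul_posLog_norm

lemma integrableOn_muRadial_mul_log : IntegrableOn (fun r ↦ muRadial r * log r) (Ioi 0) :=
  (integrable_mu2_mul_comp_norm_iff log).1 (by simpa using integrable_mu2_mul_log_norm_sub 0)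

lemma integral_Ioi_muRadial_mul_log {a : ℝ} (ha : 0 ≤ a) :
    ∫ r in Ioi a, muRadial r * log r = log (1 + a ^ 2) / 2 - a ^ 2 / (1 + a ^ 2) * log a := by
  rw [integral_Ioi_of_hasDerivAt_of_tendsto
    continuous_primitive_muRadial_mul_log.continuousWithinAt
    (fun r hr ↦ hasDerivAt_primitive_muRadial_mul_log (ha.trans_lt hr))
    (integrableOn_muRadial_mul_log.mono_set (Ioi_subset_Ioi ha)) tendsto_primitive_muRadial_mul_log]
  ring

lemma integral_muRadial_mul_log_max {a : ℝ} (ha : 0 ≤ a) :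
    ∫ r in Ioi 0, muRadial r * log (max a r) = log (1 + a ^ 2) / 2 := by
  have hinner : EqOn (fun r ↦ muRadial r * log (max a r)) (fun r ↦ muRadial r * log a)
      (Ioc 0 a) := fun r hr ↦ by simp only [max_eq_left hr.2]
  have houter : EqOn (fun r ↦ muRadial r * log (max a r)) (fun r ↦ muRadial r * log r)
      (Ioi a) := fun r (hr : a < r) ↦ by simp only [max_eq_right hr.le]
  have integrable_inner : IntegrableOn (fun r ↦ muRadial r * log (max a r)) (Ioc 0 a) :=
    IntegrableOn.congr_fun ((integrableOn_muRadial.mono_set Ioc_subset_Ioi_self).mul_const _)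
      hinner.symm measurableSet_Ioc
  have integrable_outer : IntegrableOn (fun r ↦ muRadial r * log (max a r)) (Ioi a) :=
    (integrableOn_muRadial_mul_log.mono_set (Ioi_subset_Ioi ha)).congr_fun houter.symm
      measurableSet_Ioi
  rw [← Ioc_union_Ioi_eq_Ioi ha, setIntegral_union (Ioc_disjoint_Ioi le_rfl) measurableSet_Ioi
    integrable_inner integrable_outer, setIntegral_congr_fun measurableSet_Ioc hinner,
    setIntegral_congr_fun measurableSet_Ioi houter, integral_mul_const, integral_Ioc_muRadial ha,
    integral_Ioi_muRadial_mul_log ha]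
  ring

lemma integral_mu2_mul_log_norm_sub (x : E2) :
    ∫ y : E2, mu2 y * log ‖x - y‖ = log (1 + ‖x‖ ^ 2) / 2 :=
  calc ∫ y : E2, mu2 y * log ‖x - y‖
      = ∫ y : E2, mu2 y * log (max ‖x‖ ‖y‖) :=
        integral_radial_mul_log_norm_sub (w := fun r ↦ 1 / (π * (1 + r ^ 2) ^ 2)) x
          (integrable_mu2_mul_log_norm_sub x)
    _ = ∫ r in Ioi 0, muRadial r * log (max ‖x‖ r) :=
        integral_mu2_mul_comp_norm fun r ↦ log (max ‖x‖ r)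
    _ = log (1 + ‖x‖ ^ 2) / 2 := integral_muRadial_mul_log_max (norm_nonneg x)

lemma integral_mu2_mul_log_mu2 : ∫ x, mu2 x * log (mu2 x) = -2 - log π := by
  have hentropy (x : E2) :
      mu2 x * log (mu2 x) = -2 * (mu2 x * log (1 + ‖x‖ ^ 2)) - log π * mu2 x := by
    rw [log_mu2, Vpot]
    ring
  simp only [hentropy]
  rw [integral_sub (integrable_mu2_mul_log_one_add_sq.const_mul _) (integrable_mu2.const_mul _),
    integral_const_mul, integral_const_mul, integral_mu2_mul_log_one_add_sq, integral_mu2,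
    mul_one, mul_one]

lemma integral_mu2_mul_mu2_mul_log_norm_sub :
    ∫ p : E2 × E2, mu2 p.1 * mu2 p.2 * log ‖p.1 - p.2‖ = 1 / 2 :=
  calc ∫ p : E2 × E2, mu2 p.1 * mu2 p.2 * log ‖p.1 - p.2‖
      = ∫ x, ∫ y, mu2 x * mu2 y * log ‖x - y‖ :=
        integral_prod _ integrable_mu2_mul_mu2_mul_log_norm_sub
    _ = ∫ x : E2, mu2 x * log (1 + ‖x‖ ^ 2) / 2 := by
        simp only [mul_assoc, integral_const_mul, integral_mu2_mul_log_norm_sub, mul_div_assoc]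
    _ = 1 / 2 := by rw [integral_div, integral_mu2_mul_log_one_add_sq]

end Mu

/-- Explicit values of the entropy and the logarithmic interaction of μ, and the
equality case of the logarithmic Hardy–Littlewood–Sobolev inequality. -/
theorem mu_equality_case :
    (∫ x : E2, mu2 x * Real.log (mu2 x)) = -2 - Real.log π ∧
    (∫ p : E2 × E2, mu2 p.1 * mu2 p.2 * Real.log ‖p.1 - p.2‖) = 1 / 2 ∧
    (∫ x : E2, mu2 x * Real.log (mu2 x))
        + 2 * (∫ p : E2 × E2, mu2 p.1 * mu2 p.2 * Real.log ‖p.1 - p.2‖)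
        + 1 + Real.log π = 0 := by
  refine ⟨integral_mu2_mul_log_mu2, integral_mu2_mul_mu2_mul_log_norm_sub, ?_⟩
  rw [integral_mu2_mul_log_mu2, integral_mu2_mul_mu2_mul_log_norm_sub]
  ring
end
end
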